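/- For every nonnegative integer n, cp^e_{1,1,2}(n) − cp^o_{1,1,2}(n) equals the number of pairs (μ,ν) of partitions with |μ|+|ν| = n such that μ has distinct parts all of which are even, and every part of ν is ≡ 2 (mod 4). -/

import Mathlib

/-- `(γ, ρ, σ)` is an `(a,b,m)`-copartition. -/
def IsCopartition (a b m : ℕ) (γ ρ σ : Multiset ℕ) : Prop :=
  (∀ x ∈ γ, a ≤ x ∧ x % m = a % m) ∧
  (∀ x ∈ σ, b ≤ x ∧ x % m = b % m) ∧
  ρ = Multiset.replicate (Multiset.card σ) (m * Multiset.card γ)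

/-- The set of `(a,b,m)`-copartitions of size `n`. -/
def cpSet (a b m n : ℕ) : Set (Multiset ℕ × Multiset ℕ × Multiset ℕ) :=
  {t | IsCopartition a b m t.1 t.2.1 t.2.2 ∧ t.1.sum + t.2.1.sum + t.2.2.sum = n}

/-- `cp^o_{a,b,m}(n)`. -/
noncomputable def cpOdd (a b m n : ℕ) : ℕ :=
  {t ∈ cpSet a b m n | Odd (Multiset.card t.1)}.ncard

/-- `cp^e_{a,b,m}(n)`. -/
noncomputable def cpEven (a b m n : ℕ) : ℕ :=
  {t ∈ cpSet a b m n | Even (Multiset.card t.1)}.ncard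


/-- Multisets of positive integers with sum `n`. -/
noncomputable def ms (n : ℕ) : Finset (Multiset ℕ) :=
  (Finset.univ : Finset (Nat.Partition n)).image (fun p => p.parts)

theorem mem_ms (n : ℕ) (m : Multiset ℕ) : m ∈ ms n ↔ (∀ x ∈ m, 0 < x) ∧ m.sum = n := by
  unfold ms
  simp only [Finset.mem_image, Finset.mem_univ, true_and]
  constructor
  · rintro ⟨p, rfl⟩
    exact ⟨fun x hx => p.parts_pos hx, p.parts_sum⟩
  · rintro ⟨h1, h2⟩
    exact ⟨⟨m, fun {x} hx => h1 x hx, h2⟩, rfl⟩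

open Classical in
/-- Generating function of multisets satisfying `M`, weighted by `ε ^ card`. -/
noncomputable def gf (ε : ℤ) (M : Multiset ℕ → Prop) : PowerSeries ℤ :=
  PowerSeries.mk fun n => ∑ m ∈ (ms n).filter M, ε ^ (Multiset.card m)

/-- Pairs of multisets of positive integers with total sum `n`. -/
noncomputable def prs (n : ℕ) : Finset (Multiset ℕ × Multiset ℕ) :=
  (Finset.HasAntidiagonal.antidiagonal n).biUnion fun k => ms k.1 ×ˢ ms k.2

theorem mem_prs (n : ℕ) (p : Multiset ℕ × Multiset ℕ) : p ∈ prs n ↔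
    (∀ x ∈ p.1, 0 < x) ∧ (∀ x ∈ p.2, 0 < x) ∧ p.1.sum + p.2.sum = n := by
  unfold prs
  simp only [Finset.mem_biUnion, Finset.HasAntidiagonal.mem_antidiagonal, Finset.mem_product, mem_ms]
  constructor
  · rintro ⟨k, hk, ⟨h1, h2⟩, h3, h4⟩
    exact ⟨h1, h3, by omega⟩
  · rintro ⟨h1, h2, h3⟩
    exact ⟨(p.1.sum, p.2.sum), h3, ⟨h1, rfl⟩, h2, rfl⟩

open Classical in
theorem coeff_gf (ε : ℤ) (M : Multiset ℕ → Prop) (n : ℕ) :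
    PowerSeries.coeff n (gf ε M) = ∑ m ∈ (ms n).filter M, ε ^ (Multiset.card m) := by
  simp [gf]

open Classical in
theorem coeff_gf_mul (ε δ : ℤ) (M N : Multiset ℕ → Prop) (n : ℕ) :
    PowerSeries.coeff n (gf ε M * gf δ N) =
      ∑ p ∈ (prs n).filter (fun p => M p.1 ∧ N p.2),
        ε ^ (Multiset.card p.1) * δ ^ (Multiset.card p.2) := by
  rw [PowerSeries.coeff_mul, prs, Finset.filter_biUnion, Finset.sum_biUnion]
  · refine Finset.sum_congr rfl fun k _ => ?_
    rw [coeff_gf, coeff_gf, Finset.sum_mul_sum, ← Finset.sum_product', ← Finset.filter_product]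
  · intro a _ b _ hab
    rw [Function.onFun, Finset.disjoint_left]
    rintro p hp hq
    simp only [Finset.mem_filter, Finset.mem_product, mem_ms] at hp hq
    exact hab (Prod.ext (by rw [← hp.1.1.2, ← hq.1.1.2]) (by rw [← hp.1.2.2, ← hq.1.2.2]))

theorem gf_congr (ε : ℤ) (M N : Multiset ℕ → Prop)
    (h : ∀ m : Multiset ℕ, (∀ x ∈ m, 0 < x) → (M m ↔ N m)) : gf ε M = gf ε N := by
  classical
  ext n
  rw [coeff_gf, coeff_gf]
  congr 1
  ext m
  simp only [Finset.mem_filter, mem_ms]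
  constructor
  · rintro ⟨h1, h2⟩; exact ⟨h1, (h m h1.1).1 h2⟩
  · rintro ⟨h1, h2⟩; exact ⟨h1, (h m h1.1).2 h2⟩

theorem gf_split (ε : ℤ) (M N : Multiset ℕ → Prop) :
    gf ε M = gf ε (fun m => M m ∧ N m) + gf ε (fun m => M m ∧ ¬ N m) := by
  classical
  ext n
  rw [map_add, coeff_gf, coeff_gf, coeff_gf]
  simp only [Finset.sum_filter]
  rw [← Finset.sum_add_distrib]
  refine Finset.sum_congr rfl fun m _ => ?_
  by_cases h1 : M m <;> by_cases h2 : N m <;> simp [h1, h2]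

theorem gf_map (ε c : ℤ) (d : ℕ) (M N : Multiset ℕ → Prop) (f g : Multiset ℕ → Multiset ℕ)
    (hf : ∀ m, M m → (∀ x ∈ m, 0 < x) → N (f m) ∧ (∀ x ∈ f m, 0 < x) ∧ (f m).sum = m.sum + d ∧
      ε ^ (Multiset.card (f m)) = c * ε ^ (Multiset.card m) ∧ g (f m) = m)
    (hg : ∀ m, N m → (∀ x ∈ m, 0 < x) → M (g m) ∧ (∀ x ∈ g m, 0 < x) ∧ f (g m) = m) :
    gf ε N = PowerSeries.C c * PowerSeries.X ^ d * gf ε M := by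
  classical
  ext n
  rw [mul_assoc, PowerSeries.coeff_C_mul, PowerSeries.coeff_X_pow_mul', coeff_gf]
  split_ifs with hd
  · rw [coeff_gf, Finset.mul_sum]
    symm
    refine Finset.sum_bij' (fun m _ => f m) (fun m _ => g m) ?_ ?_ ?_ ?_ ?_
    · intro m hm
      simp only [Finset.mem_filter, mem_ms] at hm ⊢
      have := hf m hm.2 hm.1.1
      exact ⟨⟨this.2.1, by omega⟩, this.1⟩
    · intro m hm
      simp only [Finset.mem_filter, mem_ms] at hm ⊢
      have h1 := hg m hm.2 hm.1.1
      have h2 := hf _ h1.1 h1.2.1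
      rw [h1.2.2] at h2
      exact ⟨⟨h1.2.1, by omega⟩, h1.1⟩
    · intro m hm
      simp only [Finset.mem_filter, mem_ms] at hm
      exact (hf m hm.2 hm.1.1).2.2.2.2
    · intro m hm
      simp only [Finset.mem_filter, mem_ms] at hm
      exact (hg m hm.2 hm.1.1).2.2
    · intro m hm
      simp only [Finset.mem_filter, mem_ms] at hm
      exact (hf m hm.2 hm.1.1).2.2.2.1.symm
  · rw [Finset.filter_eq_empty_iff.2, Finset.sum_empty, mul_zero]
    intro m hm hN
    rw [mem_ms] at hm
    have h1 := hg m hN hm.1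
    have h2 := hf _ h1.1 h1.2.1
    rw [h1.2.2] at h2
    omega

/-- Remove one copy of the part `a`. -/
theorem gf_remove (ε : ℤ) (S : ℕ → Prop) (a : ℕ) (ha : 0 < a) (hS : S a) :
    gf ε (fun m => ∀ x ∈ m, S x) = gf ε (fun m => ∀ x ∈ m, S x ∧ x ≠ a) +
      PowerSeries.C ε * PowerSeries.X ^ a * gf ε (fun m => ∀ x ∈ m, S x) := by
  rw [gf_split ε _ (fun m => a ∉ m)]
  congr 1
  · apply gf_congr
    intro m _
    constructor
    · rintro ⟨h1, h2⟩ x hx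
      exact ⟨h1 x hx, fun h => h2 (h ▸ hx)⟩
    · intro h
      exact ⟨fun x hx => (h x hx).1, fun h' => (h a h').2 rfl⟩
  · rw [← gf_split]
    apply gf_map ε ε a _ _ (fun m => a ::ₘ m) (fun m => m.erase a)
    · intro m hm hp
      refine ⟨?_, ?_, ?_, ?_, ?_⟩
      · simpa using ⟨hS, hm⟩
      · simpa using ⟨ha, hp⟩
      · simp [add_comm]
      · simp [pow_succ, mul_comm]
      · simp
    · rintro m ⟨h1, h2⟩ hp
      refine ⟨fun x hx => h1 x (Multiset.mem_of_mem_erase hx),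
        fun x hx => hp x (Multiset.mem_of_mem_erase hx), Multiset.cons_erase (not_not.1 h2)⟩

/-- Shift all parts by 2 -/
theorem sum_map_add (m : Multiset ℕ) (k : ℕ) :
    (m.map (· + k)).sum = m.sum + k * Multiset.card m := by
  induction m using Multiset.induction_on with
  | empty => simp
  | cons a m ih => simp [ih]; ring

theorem map_add_sub (m : Multiset ℕ) (k : ℕ) : (m.map (· + k)).map (· - k) = m := by
  simp

theorem map_sub_add (m : Multiset ℕ) (k : ℕ) (h : ∀ x ∈ m, k ≤ x) :
    (m.map (· - k)).map (· + k) = m := by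
  rw [Multiset.map_map]
  conv_rhs => rw [← Multiset.map_id m]
  apply Multiset.map_congr rfl
  intro x hx
  have := h x hx
  simp; omega

/-- odd parts, `s` of them -/
def PB (s : ℕ) (m : Multiset ℕ) : Prop := (∀ x ∈ m, x % 2 = 1) ∧ Multiset.card m = s
/-- distinct even parts, `s` of them -/
def PE (s : ℕ) (m : Multiset ℕ) : Prop :=
  (m.Nodup ∧ ∀ x ∈ m, 0 < x ∧ Even x) ∧ Multiset.card m = s

theorem gfB_succ (s : ℕ) : gf 1 (PB (s + 1)) =
    PowerSeries.X * gf 1 (PB s) + PowerSeries.X ^ (2 * (s + 1)) * gf 1 (PB (s + 1)) := by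
  rw [gf_split 1 (PB (s+1)) (fun m => 1 ∈ m)]
  congr 1
  · rw [gf_map 1 1 1 (PB s) _ (fun m => 1 ::ₘ m) (fun m => m.erase 1)]
    · simp
    · rintro m ⟨h1, h2⟩ hp
      refine ⟨⟨⟨?_, ?_⟩, ?_⟩, ?_, ?_, ?_, ?_⟩
      · simpa using h1
      · simp [h2]
      · simp
      · simpa using hp
      · simp [add_comm]
      · simp
      · simp
    · rintro m ⟨⟨h1, h2⟩, h3⟩ hp
      refine ⟨⟨fun x hx => h1 x (Multiset.mem_of_mem_erase hx), ?_⟩,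
        fun x hx => hp x (Multiset.mem_of_mem_erase hx), Multiset.cons_erase h3⟩
      rw [Multiset.card_erase_of_mem h3, h2]; rfl
  · rw [← gf_split]
    rw [gf_map 1 1 (2*(s+1)) (PB (s+1)) _ (fun m => m.map (· + 2)) (fun m => m.map (· - 2))]
    · simp
    · rintro m ⟨h1, h2⟩ hp
      refine ⟨⟨⟨?_, ?_⟩, ?_⟩, ?_, ?_, ?_, ?_⟩
      · intro x hx
        obtain ⟨y, hy, rfl⟩ := Multiset.mem_map.1 hx
        have := h1 y hy
        omega
      · simp [h2]
      · simp
      · intro x hx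
        obtain ⟨y, hy, rfl⟩ := Multiset.mem_map.1 hx
        omega
      · rw [sum_map_add, h2]
      · simp
      · exact map_add_sub m 2
    · rintro m ⟨⟨h1, h2⟩, h3⟩ hp
      have key : ∀ x ∈ m, 3 ≤ x := by
        intro x hx
        have := h1 x hx
        have : x ≠ 1 := fun h => h3 (h ▸ hx)
        omega
      refine ⟨⟨?_, ?_⟩, ?_, ?_⟩
      · intro x hx
        obtain ⟨y, hy, rfl⟩ := Multiset.mem_map.1 hx
        have := h1 y hy
        have := key y hy
        omega
      · simp [h2]
      · intro x hx
        obtain ⟨y, hy, rfl⟩ := Multiset.mem_map.1 hx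
        have := key y hy
        omega
      · exact map_sub_add m 2 fun x hx => by have := key x hx; omega

theorem gfE_succ (s : ℕ) : gf 1 (PE (s + 1)) =
    PowerSeries.X ^ (2 * (s + 1)) * gf 1 (PE s) +
      PowerSeries.X ^ (2 * (s + 1)) * gf 1 (PE (s + 1)) := by
  have nd2 : ∀ m : Multiset ℕ, m.Nodup → (m.map (· + 2)).Nodup := fun m hm =>
    hm.map (fun a b h => by simpa using h)
  have nds : ∀ m : Multiset ℕ, m.Nodup → (∀ x ∈ m, 2 ≤ x) → (m.map (· - 2)).Nodup := by
    intro m hm h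
    refine Multiset.Nodup.map_on ?_ hm
    intro x hx y hy hxy
    have := h x hx
    have := h y hy
    omega
  rw [gf_split 1 (PE (s+1)) (fun m => 2 ∈ m)]
  congr 1
  · rw [gf_map 1 1 (2*(s+1)) (PE s) _ (fun m => 2 ::ₘ m.map (· + 2))
      (fun m => (m.erase 2).map (· - 2))]
    · simp
    · rintro m ⟨⟨h0, h1⟩, h2⟩ hp
      refine ⟨⟨⟨⟨?_, ?_⟩, ?_⟩, ?_⟩, ?_, ?_, ?_, ?_⟩
      · rw [Multiset.nodup_cons]
        refine ⟨?_, nd2 m h0⟩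
        intro hx
        obtain ⟨y, hy, h⟩ := Multiset.mem_map.1 hx
        have := hp y hy
        omega
      · intro x hx
        rcases Multiset.mem_cons.1 hx with rfl | hx
        · decide
        obtain ⟨y, hy, rfl⟩ := Multiset.mem_map.1 hx
        have := h1 y hy
        rw [Nat.even_iff] at *
        omega
      · simp [h2]
      · simp
      · intro x hx
        rcases Multiset.mem_cons.1 hx with rfl | hx
        · decide
        obtain ⟨y, hy, rfl⟩ := Multiset.mem_map.1 hx
        omega
      · rw [Multiset.sum_cons, sum_map_add, h2]; ring
      · simp
      · simp
    · rintro m ⟨⟨⟨h0, h1⟩, h2⟩, h3⟩ hp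
      have key : ∀ x ∈ m.erase 2, 4 ≤ x ∧ x % 2 = 0 := by
        intro x hx
        have := h1 x (Multiset.mem_of_mem_erase hx)
        have : x ≠ 2 := fun h => by
          subst h
          exact h0.notMem_erase hx
        rw [Nat.even_iff] at *
        omega
      refine ⟨⟨⟨?_, ?_⟩, ?_⟩, ?_, ?_⟩
      · exact nds _ (h0.erase 2) fun x hx => by have := key x hx; omega
      · intro x hx
        obtain ⟨y, hy, rfl⟩ := Multiset.mem_map.1 hx
        have := key y hy
        rw [Nat.even_iff]
        omega
      · rw [Multiset.card_map, Multiset.card_erase_of_mem h3, h2]; rfl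
      · intro x hx
        obtain ⟨y, hy, rfl⟩ := Multiset.mem_map.1 hx
        have := key y hy
        omega
      · rw [map_sub_add _ 2 fun x hx => by have := key x hx; omega]
        exact Multiset.cons_erase h3
  · rw [← gf_split]
    rw [gf_map 1 1 (2*(s+1)) (PE (s+1)) _ (fun m => m.map (· + 2)) (fun m => m.map (· - 2))]
    · simp
    · rintro m ⟨⟨h0, h1⟩, h2⟩ hp
      refine ⟨⟨⟨⟨nd2 m h0, ?_⟩, ?_⟩, ?_⟩, ?_, ?_, ?_, ?_⟩
      · intro x hx
        obtain ⟨y, hy, rfl⟩ := Multiset.mem_map.1 hx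
        have := h1 y hy
        rw [Nat.even_iff] at *
        omega
      · simp [h2]
      · intro hx
        obtain ⟨y, hy, h⟩ := Multiset.mem_map.1 hx
        have := hp y hy
        omega
      · intro x hx
        obtain ⟨y, hy, rfl⟩ := Multiset.mem_map.1 hx
        omega
      · rw [sum_map_add, h2]
      · simp
      · exact map_add_sub m 2
    · rintro m ⟨⟨⟨h0, h1⟩, h2⟩, h3⟩ hp
      have key : ∀ x ∈ m, 4 ≤ x ∧ x % 2 = 0 := by
        intro x hx
        have := h1 x hx
        have : x ≠ 2 := fun h => h3 (h ▸ hx)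
        rw [Nat.even_iff] at *
        omega
      refine ⟨⟨⟨?_, ?_⟩, ?_⟩, ?_, ?_⟩
      · exact nds _ h0 fun x hx => by have := key x hx; omega
      · intro x hx
        obtain ⟨y, hy, rfl⟩ := Multiset.mem_map.1 hx
        have := key y hy
        rw [Nat.even_iff]
        omega
      · simp [h2]
      · intro x hx
        obtain ⟨y, hy, rfl⟩ := Multiset.mem_map.1 hx
        have := key y hy
        omega
      · exact map_sub_add m 2 fun x hx => by have := key x hx; omega


/-- The convolution of `PE` and `PB`. -/
noncomputable def TT (s : ℕ) : PowerSeries ℤ :=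
  ∑ p ∈ Finset.HasAntidiagonal.antidiagonal s, gf 1 (PE p.1) * gf 1 (PB p.2)

theorem conv_rec {R : Type*} [CommRing R] (x y : R) (e b : ℕ → R)
    (he : ∀ i, e (i + 1) * (1 - x ^ (i + 1)) = x ^ (i + 1) * e i)
    (hb : ∀ i, b (i + 1) * (1 - x ^ (i + 1)) = y * b i) (s : ℕ) :
    (∑ p ∈ Finset.HasAntidiagonal.antidiagonal (s + 1), e p.1 * b p.2) * (1 - x ^ (s + 1)) =
      (y + x ^ (s + 1)) * ∑ p ∈ Finset.HasAntidiagonal.antidiagonal s, e p.1 * b p.2 := by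
  have h1 : (∑ p ∈ Finset.HasAntidiagonal.antidiagonal (s + 1), e p.1 * b p.2) * (1 - x ^ (s + 1))
      = (∑ p ∈ Finset.HasAntidiagonal.antidiagonal (s + 1), e p.1 * (b p.2 * (1 - x ^ p.2))) +
        ∑ p ∈ Finset.HasAntidiagonal.antidiagonal (s + 1), b p.2 * x ^ p.2 * (e p.1 * (1 - x ^ p.1)) := by
    rw [← Finset.sum_add_distrib, Finset.sum_mul]
    refine Finset.sum_congr rfl fun p hp => ?_
    rw [Finset.HasAntidiagonal.mem_antidiagonal] at hp
    rw [← hp, pow_add]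
    ring
  rw [h1, Finset.Nat.sum_antidiagonal_succ', Finset.Nat.sum_antidiagonal_succ]
  simp only [he, hb]
  simp only [pow_zero, sub_self, mul_zero, zero_add, add_zero]
  rw [← Finset.sum_add_distrib, Finset.mul_sum]
  refine Finset.sum_congr rfl fun p hp => ?_
  rw [Finset.HasAntidiagonal.mem_antidiagonal] at hp
  rw [← hp]
  ring

theorem TT_succ (s : ℕ) : TT (s + 1) * (1 - (PowerSeries.X ^ 2) ^ (s + 1)) =
    (PowerSeries.X + (PowerSeries.X ^ 2) ^ (s + 1)) * TT s := by
  unfold TT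
  apply conv_rec (PowerSeries.X ^ 2) PowerSeries.X (fun i => gf 1 (PE i)) (fun i => gf 1 (PB i))
  · intro i
    have := gfE_succ i
    rw [pow_mul] at this
    linear_combination this
  · intro i
    have := gfB_succ i
    rw [pow_mul] at this
    linear_combination this

theorem gf_dvd (ε : ℤ) (M : Multiset ℕ → Prop) (d : ℕ) (h0 : M 0)
    (h : ∀ m, M m → m = 0 ∨ d ≤ m.sum) : (PowerSeries.X ^ d : PowerSeries ℤ) ∣ gf ε M - 1 := by
  classical
  rw [PowerSeries.X_pow_dvd_iff]
  intro k hk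
  rw [map_sub, coeff_gf, PowerSeries.coeff_one]
  split_ifs with hk0
  · subst hk0
    rw [show (ms 0).filter M = {0} from ?_]
    · simp
    · ext m
      simp only [Finset.mem_filter, mem_ms, Finset.mem_singleton]
      constructor
      · rintro ⟨⟨_, h2⟩, h3⟩
        rcases h m h3 with h | h
        · exact h
        · omega
      · rintro rfl
        simpa using h0
  · rw [Finset.filter_eq_empty_iff.2]
    · simp
    · intro m hm hM
      rw [mem_ms] at hm
      rcases h m hM with rfl | h
      · simp at hm; omega
      · omega

theorem eq_zero_of_X_pow_dvd (f : PowerSeries ℤ)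
    (h : ∀ d, (PowerSeries.X ^ d : PowerSeries ℤ) ∣ f) : f = 0 := by
  ext n
  exact PowerSeries.X_pow_dvd_iff.1 (h (n + 1)) n (by omega)

theorem gf_card_zero (M : Multiset ℕ → Prop) (h : ∀ m, M m ↔ m = 0) : gf 1 M = 1 := by
  rw [← sub_eq_zero]
  apply eq_zero_of_X_pow_dvd
  intro d
  apply gf_dvd
  · exact (h 0).2 rfl
  · intro m hm
    exact Or.inl ((h m).1 hm)

theorem one_sub_ne (k : ℕ) : (1 - PowerSeries.X ^ (k + 1) : PowerSeries ℤ) ≠ 0 := by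
  intro h
  have := congrArg (PowerSeries.coeff 0) h
  simp at this

theorem prodB (s : ℕ) :
    (∏ i ∈ Finset.range s, (1 + PowerSeries.X ^ (2 * i + 1))) * gf 1 (PB s) = TT s := by
  induction s with
  | zero =>
    simp only [TT, Finset.range_zero, Finset.prod_empty, one_mul]
    rw [Finset.HasAntidiagonal.antidiagonal_zero, Finset.sum_singleton, gf_card_zero (PE 0), one_mul]
    intro m
    unfold PE
    constructor
    · rintro ⟨_, h⟩
      exact Multiset.card_eq_zero.1 h
    · rintro rfl
      simp
  | succ s ih =>
    have h1 := TT_succ s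
    have h2 := gfB_succ s
    rw [← pow_mul] at h1
    apply mul_right_cancel₀ (one_sub_ne (2 * s + 1))
    rw [show 2 * s + 1 + 1 = 2 * (s + 1) by ring, h1, ← ih, Finset.prod_range_succ]
    have h3 : gf 1 (PB (s+1)) * (1 - PowerSeries.X ^ (2 * (s + 1))) = PowerSeries.X * gf 1 (PB s) := by
      linear_combination h2
    rw [mul_assoc, h3]
    ring

/-- Odd parts exceeding `2 s`. -/
def PA (s : ℕ) (m : Multiset ℕ) : Prop := ∀ x ∈ m, x % 2 = 1 ∧ 2 * s < x
/-- Parts `2 mod 4` exceeding `4 s`. -/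
def PQ (s : ℕ) (m : Multiset ℕ) : Prop := ∀ x ∈ m, x % 4 = 2 ∧ 4 * s < x

theorem gfA_succ (ε : ℤ) (s : ℕ) :
    gf ε (PA s) = gf ε (PA (s+1)) + PowerSeries.C ε * PowerSeries.X ^ (2 * s + 1) * gf ε (PA s) := by
  have h := gf_remove ε (fun x => x % 2 = 1 ∧ 2 * s < x) (2 * s + 1) (by omega) (by omega)
  rw [gf_congr ε (fun m => ∀ x ∈ m, (x % 2 = 1 ∧ 2 * s < x) ∧ x ≠ 2 * s + 1) (PA (s+1))] at h
  · exact h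
  · intro m _
    refine forall₂_congr fun x _ => ?_
    omega

theorem gfQ_succ (ε : ℤ) (s : ℕ) :
    gf ε (PQ s) = gf ε (PQ (s+1)) + PowerSeries.C ε * PowerSeries.X ^ (4 * s + 2) * gf ε (PQ s) := by
  have h := gf_remove ε (fun x => x % 4 = 2 ∧ 4 * s < x) (4 * s + 2) (by omega) (by omega)
  rw [gf_congr ε (fun m => ∀ x ∈ m, (x % 4 = 2 ∧ 4 * s < x) ∧ x ≠ 4 * s + 2) (PQ (s+1))] at h
  · exact h
  · intro m _
    refine forall₂_congr fun x _ => ?_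
    omega

theorem gfA_prod (s : ℕ) : gf (-1) (PA s) =
    gf (-1) (PA 0) * ∏ i ∈ Finset.range s, (1 + PowerSeries.X ^ (2 * i + 1)) := by
  induction s with
  | zero => simp
  | succ s ih =>
    have h := gfA_succ (-1) s
    rw [Finset.prod_range_succ, ← mul_assoc, ← ih]
    simp only [map_neg, map_one] at h
    linear_combination -h

theorem dvd_of_ge (ε : ℤ) (M : Multiset ℕ → Prop) (d : ℕ) (h0 : M 0)
    (h : ∀ m, M m → ∀ x ∈ m, d ≤ x) : (PowerSeries.X ^ d : PowerSeries ℤ) ∣ gf ε M - 1 := by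
  apply gf_dvd _ _ _ h0
  intro m hm
  rcases Multiset.empty_or_exists_mem m with h1 | ⟨x, hx⟩
  · exact Or.inl h1
  · exact Or.inr ((h m hm x hx).trans (Multiset.le_sum_of_mem hx))

theorem AO_eq : gf (-1) (PA 0) * gf 1 (PA 0) = gf 1 (PQ 0) := by
  rw [← sub_eq_zero]
  have key : ∀ s, gf (-1) (PA s) * gf 1 (PA s) - gf 1 (PQ s) =
      (∏ i ∈ Finset.range s, (1 - PowerSeries.X ^ (4 * i + 2))) *
        (gf (-1) (PA 0) * gf 1 (PA 0) - gf 1 (PQ 0)) := by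
    intro s
    induction s with
    | zero => simp
    | succ s ih =>
      have h1 := gfA_succ (-1) s
      have h2 := gfA_succ 1 s
      have h3 := gfQ_succ 1 s
      rw [Finset.prod_range_succ, mul_right_comm, ← ih]
      simp only [map_neg, map_one] at h1 h2 h3
      have h1' : gf (-1) (PA (s+1)) = gf (-1) (PA s) * (1 + PowerSeries.X ^ (2 * s + 1)) := by
        linear_combination -h1
      have h2' : gf 1 (PA (s+1)) = gf 1 (PA s) * (1 - PowerSeries.X ^ (2 * s + 1)) := by
        linear_combination -h2
      have h3' : gf 1 (PQ (s+1)) = gf 1 (PQ s) * (1 - PowerSeries.X ^ (4 * s + 2)) := by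
        linear_combination -h3
      rw [h1', h2', h3']
      ring
  apply eq_zero_of_X_pow_dvd
  intro d
  have hu : IsUnit (∏ i ∈ Finset.range d, (1 - PowerSeries.X ^ (4 * i + 2)) : PowerSeries ℤ) := by
    rw [PowerSeries.isUnit_iff_constantCoeff]
    simp
  rw [← hu.dvd_mul_left, ← key d]
  have a1 := dvd_of_ge (-1) (PA d) d (by simp [PA]) (fun m hm x hx => by have := hm x hx; omega)
  have a2 := dvd_of_ge 1 (PA d) d (by simp [PA]) (fun m hm x hx => by have := hm x hx; omega)
  have a3 := dvd_of_ge 1 (PQ d) d (by simp [PQ]) (fun m hm x hx => by have := hm x hx; omega)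
  have := ((a1.mul_right (gf 1 (PA d))).add a2).sub a3
  convert this using 1
  ring

theorem card_le_sum' (m : Multiset ℕ) (h : ∀ x ∈ m, 0 < x) : Multiset.card m ≤ m.sum := by
  have := Multiset.card_nsmul_le_sum (s := m) (a := 1) (fun x hx => h x hx)
  simpa using this

/-- Distinct even parts. -/
def PEE (m : Multiset ℕ) : Prop := m.Nodup ∧ ∀ x ∈ m, 0 < x ∧ Even x

theorem sum_TT (n k : ℕ) (hk : k ≤ n) :
    PowerSeries.coeff k (∑ s ∈ Finset.range (n + 1), TT s) =
      PowerSeries.coeff k (gf 1 PEE * gf 1 (PA 0)) := by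
  classical
  rw [map_sum, coeff_gf_mul]
  have : ∀ s, PowerSeries.coeff k (TT s) = ∑ p ∈ prs k,
      if PEE p.1 ∧ PA 0 p.2 ∧ Multiset.card p.1 + Multiset.card p.2 = s then (1 : ℤ) else 0 := by
    intro s
    rw [TT, map_sum]
    simp only [coeff_gf_mul, Finset.sum_filter, one_pow, mul_one]
    rw [Finset.sum_comm]
    refine Finset.sum_congr rfl fun p hp => ?_
    rw [mem_prs] at hp
    split_ifs with h
    · rw [Finset.sum_eq_single (Multiset.card p.1, Multiset.card p.2)]
      · rw [if_pos]
        exact ⟨⟨h.1, rfl⟩, fun x hx => (h.2.1 x hx).1, rfl⟩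
      · rintro ⟨i, j⟩ _ hij
        rw [if_neg]
        rintro ⟨h1, h2⟩
        exact hij (Prod.ext h1.2.symm h2.2.symm)
      · intro h'
        exact absurd (Finset.HasAntidiagonal.mem_antidiagonal.2 h.2.2) h'
    · apply Finset.sum_eq_zero
      rintro ⟨i, j⟩ hij
      rw [if_neg]
      rintro ⟨h1, h2⟩
      rw [Finset.HasAntidiagonal.mem_antidiagonal] at hij
      refine h ⟨h1.1, fun x hx => ⟨h2.1 x hx, ?_⟩, ?_⟩
      · have := hp.2.1 x hx; omega
      · rw [h1.2, h2.2]; exact hij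
  simp only [this]
  rw [Finset.sum_comm, Finset.sum_filter]
  refine Finset.sum_congr rfl fun p hp => ?_
  rw [mem_prs] at hp
  have c1 := card_le_sum' _ hp.1
  have c2 := card_le_sum' _ hp.2.1
  split_ifs with h
  · rw [Finset.sum_eq_single (Multiset.card p.1 + Multiset.card p.2)]
    · simp [h.1, h.2]
    · intro b _ hb
      rw [if_neg]
      rintro ⟨_, _, h⟩
      exact hb h.symm
    · intro h'
      simp at h'
      omega
  · apply Finset.sum_eq_zero
    intro b _
    rw [if_neg]
    rintro ⟨h1, h2, _⟩
    exact h ⟨h1, h2⟩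

theorem main_gf (n : ℕ) :
    PowerSeries.coeff n (∑ s ∈ Finset.range (n + 1), gf (-1) (PA s) * gf 1 (PB s)) =
      PowerSeries.coeff n (gf 1 PEE * gf 1 (PQ 0)) := by
  have h1 : ∑ s ∈ Finset.range (n + 1), gf (-1) (PA s) * gf 1 (PB s) =
      gf (-1) (PA 0) * ∑ s ∈ Finset.range (n + 1), TT s := by
    rw [Finset.mul_sum]
    refine Finset.sum_congr rfl fun s _ => ?_
    rw [gfA_prod, mul_assoc, prodB]
  have h2 : gf 1 PEE * gf 1 (PQ 0) = gf (-1) (PA 0) * (gf 1 PEE * gf 1 (PA 0)) := by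
    rw [← AO_eq]; ring
  rw [h1, h2, PowerSeries.coeff_mul, PowerSeries.coeff_mul]
  refine Finset.sum_congr rfl fun p hp => ?_
  rw [Finset.HasAntidiagonal.mem_antidiagonal] at hp
  rw [sum_TT n p.2 (by omega)]

/-- Index predicate for the left side. -/
def PL (p : Multiset ℕ × Multiset ℕ) : Prop :=
  (∀ x ∈ p.1, x % 2 = 1 ∧ 2 * Multiset.card p.2 < x) ∧ ∀ x ∈ p.2, x % 2 = 1

open Classical in
theorem lhs_gf (n : ℕ) :
    PowerSeries.coeff n (∑ s ∈ Finset.range (n + 1), gf (-1) (PA s) * gf 1 (PB s)) =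
      ∑ p ∈ (prs n).filter PL, (-1) ^ (Multiset.card p.1) := by
  rw [map_sum]
  simp only [coeff_gf_mul, Finset.sum_filter, one_pow, mul_one]
  rw [Finset.sum_comm]
  refine Finset.sum_congr rfl fun p hp => ?_
  rw [mem_prs] at hp
  have c2 := card_le_sum' _ hp.2.1
  split_ifs with h
  · rw [Finset.sum_eq_single (Multiset.card p.2)]
    · rw [if_pos]
      exact ⟨h.1, h.2, rfl⟩
    · intro b _ hb
      rw [if_neg]
      rintro ⟨_, _, h⟩
      exact hb h.symm
    · intro h'
      simp at h'
      omega
  · apply Finset.sum_eq_zero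
    intro b _
    rw [if_neg]
    rintro ⟨h1, h2, h3⟩
    subst h3
    exact h ⟨h1, h2⟩

open Classical in
theorem cp_card (n : ℕ) (Q : ℕ → Prop) :
    {t ∈ cpSet 1 1 2 n | Q (Multiset.card t.1)}.ncard =
      ((prs n).filter (fun p => PL p ∧ Q (Multiset.card p.1))).card := by
  rw [← Set.ncard_coe_finset]
  symm
  apply Set.ncard_congr (fun p _ => (p.1.map (· - 2 * Multiset.card p.2),
    Multiset.replicate (Multiset.card p.2) (2 * Multiset.card p.1), p.2))
  · rintro ⟨g, s⟩ hp
    simp only [SetLike.mem_coe, Finset.mem_filter, Set.mem_ofPred_eq, mem_prs] at hp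
    simp only [PL] at hp
    obtain ⟨⟨h1, h2, h3⟩, ⟨h4, h5⟩, h6⟩ := hp
    have e := map_sub_add g (2 * Multiset.card s) (fun x hx => (h4 x hx).2.le)
    have e2 := sum_map_add (g.map (· - 2 * Multiset.card s)) (2 * Multiset.card s)
    rw [e] at e2
    simp only [cpSet, IsCopartition, Set.mem_ofPred_eq]
    refine ⟨⟨⟨?_, ?_, ?_⟩, ?_⟩, ?_⟩
    · intro x hx
      obtain ⟨y, hy, rfl⟩ := Multiset.mem_map.1 hx
      have := h4 y hy
      omega
    · intro x hx
      have := h5 x hx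
      omega
    · simp
    · simp only [Multiset.card_map] at e2
      simp only [Multiset.sum_replicate, smul_eq_mul]
      rw [← h3, e2]
      ring
    · simpa using h6
  · rintro ⟨g, s⟩ ⟨g', s'⟩ hp hp' heq
    simp only [SetLike.mem_coe, Finset.mem_filter, Set.mem_ofPred_eq] at hp hp'
    simp only [PL] at hp hp'
    simp only [Prod.mk.injEq] at heq
    obtain ⟨e1, _, rfl⟩ := heq
    have e := map_sub_add g (2 * Multiset.card s) (fun x hx => (hp.2.1.1 x hx).2.le)
    have e' := map_sub_add g' (2 * Multiset.card s) (fun x hx => (hp'.2.1.1 x hx).2.le)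
    rw [← e, ← e', e1]
  · rintro ⟨g, r, s⟩ ht
    simp only [cpSet, IsCopartition, Set.mem_ofPred_eq] at ht
    obtain ⟨⟨⟨h1, h2, rfl⟩, h3⟩, h4⟩ := ht
    refine ⟨(g.map (· + 2 * Multiset.card s), s), ?_, ?_⟩
    · simp only [SetLike.mem_coe, Finset.mem_filter, Set.mem_ofPred_eq, mem_prs]
      simp only [PL]
      refine ⟨⟨?_, ?_, ?_⟩, ⟨?_, ?_⟩, ?_⟩
      · intro x hx
        obtain ⟨y, hy, rfl⟩ := Multiset.mem_map.1 hx
        have := h1 y hy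
        omega
      · intro x hx
        have := h2 x hx
        omega
      · rw [sum_map_add, ← h3]
        simp only [Multiset.sum_replicate, smul_eq_mul]
        ring
      · intro x hx
        obtain ⟨y, hy, rfl⟩ := Multiset.mem_map.1 hx
        have := h1 y hy
        omega
      · intro x hx
        have := h2 x hx
        omega
      · simpa using h4
    · simp

theorem stmt13 (n : ℕ) :
    (cpEven 1 1 2 n : ℤ) - (cpOdd 1 1 2 n : ℤ) =
      ({p : Multiset ℕ × Multiset ℕ |
         p.1.Nodup ∧ (∀ x ∈ p.1, 0 < x ∧ Even x) ∧ (∀ x ∈ p.2, x % 4 = 2) ∧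
         p.1.sum + p.2.sum = n}).ncard := by
  classical
  have hE : cpEven 1 1 2 n = _ := cp_card n (fun k => Even k)
  have hO : cpOdd 1 1 2 n = _ := cp_card n (fun k => Odd k)
  have hR : {p : Multiset ℕ × Multiset ℕ |
         p.1.Nodup ∧ (∀ x ∈ p.1, 0 < x ∧ Even x) ∧ (∀ x ∈ p.2, x % 4 = 2) ∧
         p.1.sum + p.2.sum = n} =
      (((prs n).filter (fun p => PEE p.1 ∧ PQ 0 p.2) : Finset _) : Set _) := by
    ext p
    simp only [SetLike.mem_coe, Finset.mem_filter, Set.mem_ofPred_eq, mem_prs]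
    simp only [PEE, PQ]
    constructor
    · rintro ⟨h1, h2, h3, h4⟩
      exact ⟨⟨fun x hx => (h2 x hx).1, fun x hx => by have := h3 x hx; omega, h4⟩, ⟨h1, h2⟩,
        fun x hx => by have := h3 x hx; omega⟩
    · rintro ⟨⟨_, _, h4⟩, ⟨h1, h2⟩, h3⟩
      exact ⟨h1, h2, fun x hx => (h3 x hx).1, h4⟩
  have hm := main_gf n
  rw [lhs_gf, coeff_gf_mul] at hm
  simp only [one_pow, mul_one, Finset.sum_const, nsmul_eq_mul] at hm
  rw [hR, Set.ncard_coe_finset, hE, hO, ← hm, Finset.card_filter, Finset.card_filter,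
    Finset.sum_filter]
  push_cast
  rw [← Finset.sum_sub_distrib]
  refine Finset.sum_congr rfl fun p _ => ?_
  by_cases h : PL p
  · rcases Nat.even_or_odd (Multiset.card p.1) with h' | h'
    · have := Nat.not_odd_iff_even.2 h'
      simp [h, h', this]
    · have := Nat.not_even_iff_odd.2 h'
      simp [h, h', this]
  · simp [h]
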